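/- Let m ≥ 2 and let H be the Hankel tensor of order m and dimension 3 whose parameter vector h ∈ ℂ^{2m+1} is given by h_2 = 1 and h_l = 0 for all l ≠ 2 (this is the Hankel tensor associated with the form binom(m,2)·x^{m−2}y² + m·x^{m−1}z). Then rank_V(H) = 2m − 1. -/

import Mathlib

open scoped BigOperators
open MvPolynomial

noncomputable section

/-- An order-`m`, dimension-`n` complex tensor. -/
abbrev Tensor (m n : ℕ) := (Fin m → Fin n) → ℂ

/-- Tensors expressible as a sum of `r` rank-one tensors. -/
def cpSet (m n r : ℕ) : Set (Tensor m n) :=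
  {T | ∃ u : Fin r → Fin m → Fin n → ℂ, ∀ i, T i = ∑ k, ∏ j, u k j (i j)}

/-- Tensors expressible as a sum of `r` symmetric rank-one tensors. -/
def symSet (m n r : ℕ) : Set (Tensor m n) :=
  {T | ∃ v : Fin r → Fin n → ℂ, ∀ i, T i = ∑ k, ∏ j, v k (i j)}

/-- The Vandermonde vector `v(a,b) ∈ ℂ^n`, `v(a,b)_i = a^(n-1-i) * b^i`. -/
def vand (n : ℕ) (a b : ℂ) : Fin n → ℂ := fun i => a ^ (n - 1 - (i : ℕ)) * b ^ (i : ℕ)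

/-- Tensors expressible as a sum of `r` Vandermonde rank-one tensors. -/
def vandSet (m n r : ℕ) : Set (Tensor m n) :=
  {T | ∃ ab : Fin r → ℂ × ℂ, ∀ i, T i = ∑ k, ∏ j, vand n (ab k).1 (ab k).2 (i j)}

/-- The cp rank of a tensor. -/
def cpRank {m n : ℕ} (T : Tensor m n) : ℕ := sInf {r | T ∈ cpSet m n r}

/-- The symmetric rank of a tensor. -/
def symRank {m n : ℕ} (T : Tensor m n) : ℕ := sInf {r | T ∈ symSet m n r}

/-- The Vandermonde rank of a tensor. -/
def vandRank {m n : ℕ} (T : Tensor m n) : ℕ := sInf {r | T ∈ vandSet m n r}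

/-- The border rank of a tensor (closure in the product topology). -/
def brank {m n : ℕ} (T : Tensor m n) : ℕ := sInf {r | T ∈ closure (cpSet m n r)}

/-- The symmetric border rank of a tensor. -/
def bSymRank {m n : ℕ} (T : Tensor m n) : ℕ := sInf {r | T ∈ closure (symSet m n r)}

/-- The border Vandermonde rank of a tensor. -/
def bVandRank {m n : ℕ} (T : Tensor m n) : ℕ := sInf {r | T ∈ closure (vandSet m n r)}

/-- `T` is the Hankel tensor with parameter vector `h ∈ ℂ^{(n-1)m+1}`. -/
def IsHankel {m n : ℕ} (T : Tensor m n) (h : Fin ((n - 1) * m + 1) → ℂ) : Prop :=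
  ∀ i : Fin m → Fin n, T i = h ⟨∑ j, (i j : ℕ), by
    have h1 : ∑ j, (i j : ℕ) ≤ ∑ _j : Fin m, (n - 1) :=
      Finset.sum_le_sum fun j _ => Nat.le_pred_of_lt (i j).isLt
    simp only [Finset.sum_const, Finset.card_univ, Fintype.card_fin, smul_eq_mul] at h1
    exact Nat.lt_succ_of_le (h1.trans (le_of_eq (Nat.mul_comm m (n - 1))))⟩

/-- The `(d-r+1) × (r+1)` Hankel (catalecticant) matrix `C_{d-r,r}(h)` of `h ∈ ℂ^{d+1}`. -/
def hMat (d r : ℕ) (h : Fin (d + 1) → ℂ) : Matrix (Fin (d - r + 1)) (Fin (r + 1)) ℂ :=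
  Matrix.of fun i j => if hij : (i : ℕ) + (j : ℕ) < d + 1 then h ⟨(i : ℕ) + (j : ℕ), hij⟩ else 0

/-- The binary form `f(x,y) = f_0 x^r + f_1 x^(r-1) y + ⋯ + f_r y^r`. -/
def binForm (r : ℕ) (f : Fin (r + 1) → ℂ) : MvPolynomial (Fin 2) ℂ :=
  ∑ j : Fin (r + 1), C (f j) * X 0 ^ (r - (j : ℕ)) * X 1 ^ (j : ℕ)

/-- The binary form `h(x,y) = ∑_j binom(d,j) h_j x^j y^(d-j)` associated with `h ∈ ℂ^{d+1}`. -/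
def assocForm (d : ℕ) (h : Fin (d + 1) → ℂ) : MvPolynomial (Fin 2) ℂ :=
  ∑ j : Fin (d + 1), C ((d.choose (j : ℕ) : ℂ) * h j) * X 0 ^ (j : ℕ) * X 1 ^ (d - (j : ℕ))

/-- Parameter vectors of binary forms of Waring rank at most `r`. -/
def waringSet (d r : ℕ) : Set (Fin (d + 1) → ℂ) :=
  {h | ∃ ab : Fin r → ℂ × ℂ,
    assocForm d h = ∑ i, (C (ab i).1 * X 0 + C (ab i).2 * X 1) ^ d}

/-- The Waring rank of the binary form associated with `h`. -/
def waringRank (d : ℕ) (h : Fin (d + 1) → ℂ) : ℕ := sInf {r | h ∈ waringSet d r}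

/-- The border Waring rank of the binary form associated with `h`. -/
def bWaringRank (d : ℕ) (h : Fin (d + 1) → ℂ) : ℕ := sInf {r | h ∈ closure (waringSet d r)}

/-!
A Hankel tensor is a sum of `r` Vandermonde powers iff its parameters are the moments
`∑ k, a_k ^ (d - l) * b_k ^ l`, `l ≤ d`, of `r` points `(a_k, b_k)`. Suppose that only the `s`-th
moment is nonzero and `0 < s`. With weights `w_k = b_k ^ d` and nodes `t_k = a_k / b_k`, the sums
`∑ k, w_k * t_k ^ i` vanish for `i < d - s` and not for `i = d - s`. If there were at most `d - s`
nodes, a monic polynomial of degree `d - s` vanishing at all of them would contradict this.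
Exchanging `a` and `b` gives the bound with `s` in place of `d - s`. Conversely, for
`N = max s (d - s) + 1`, orthogonality of the characters of the `N`-th roots of unity provides
`N` points with the required moments.
-/

section Moments

variable {R K κ : Type*} [Fintype κ]

/-- The `l`-th moment of degree `d` of a finite family of points `p k = (a_k, b_k)`. Up to the
factor `d.choose l`, it is the coefficient of `x ^ (d - l) * y ^ l` in `∑ k, (a_k x + b_k y) ^ d`,
and for `d = (n - 1) * m` it is the `l`-th parameter of the Hankel tensor `∑ k, v(a_k, b_k)^{⊗ m}`.
It is only meaningful for `l ≤ d`. -/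
def powerMoment [CommSemiring R] (d : ℕ) (p : κ → R × R) (l : ℕ) : R :=
  ∑ k, (p k).1 ^ (d - l) * (p k).2 ^ l

lemma powerMoment_swap [CommSemiring R] {d l : ℕ} (hl : l ≤ d) (p : κ → R × R) :
    powerMoment d (fun k => (p k).swap) l = powerMoment d p (d - l) := by
  simp only [powerMoment, Prod.fst_swap, Prod.snd_swap, Nat.sub_sub_self hl, mul_comm]

lemma sum_mul_eval_eq_sum_coeff_mul [CommSemiring R] (w t : κ → R) (q : Polynomial R) :
    ∑ k, w k * q.eval (t k) =
      ∑ i ∈ Finset.range (q.natDegree + 1), q.coeff i * ∑ k, w k * t k ^ i := by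
  simp only [Polynomial.eval_eq_sum_range, Finset.mul_sum]
  rw [Finset.sum_comm]
  simp only [mul_left_comm]

lemma exists_monic_natDegree_eq_forall_eval_eq_zero [CommRing R] [Nontrivial R] (t : κ → R)
    {n : ℕ} (hn : Fintype.card κ ≤ n) :
    ∃ q : Polynomial R, q.Monic ∧ q.natDegree = n ∧ ∀ k, q.eval (t k) = 0 := by
  have hmonic : (Lagrange.nodal Finset.univ t).Monic := Lagrange.nodal_monic
  refine ⟨Polynomial.X ^ (n - Fintype.card κ) * Lagrange.nodal Finset.univ t,
    (Polynomial.monic_X_pow _).mul hmonic, ?_, fun k => ?_⟩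
  · rw [(Polynomial.monic_X_pow _).natDegree_mul hmonic, Polynomial.natDegree_X_pow,
      Lagrange.natDegree_nodal, Finset.card_univ, Nat.sub_add_cancel hn]
  · rw [Polynomial.eval_mul, Lagrange.eval_nodal_at_node (Finset.mem_univ k), mul_zero]

lemma lt_card_of_sum_mul_pow_ne_zero [CommRing R] {w t : κ → R} {n : ℕ}
    (hlt : ∀ i < n, ∑ k, w k * t k ^ i = 0) (hn : ∑ k, w k * t k ^ n ≠ 0) :
    n < Fintype.card κ := by
  have : Nontrivial R := nontrivial_of_ne _ _ hn
  by_contra! hcard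
  obtain ⟨q, hmonic, rfl, hroot⟩ := exists_monic_natDegree_eq_forall_eval_eq_zero t hcard
  refine hn ?_
  calc ∑ k, w k * t k ^ q.natDegree
      = ∑ i ∈ Finset.range (q.natDegree + 1), q.coeff i * ∑ k, w k * t k ^ i := by
        have hlower : ∑ i ∈ Finset.range q.natDegree, q.coeff i * ∑ k, w k * t k ^ i = 0 :=
          Finset.sum_eq_zero fun i hi => by rw [hlt i (Finset.mem_range.1 hi), mul_zero]
        rw [Finset.sum_range_succ, hlower, zero_add, hmonic.coeff_natDegree, one_mul]
    _ = ∑ k, w k * q.eval (t k) := (sum_mul_eval_eq_sum_coeff_mul w t q).symm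
    _ = 0 := by simp only [hroot, mul_zero, Finset.sum_const_zero]

lemma powerMoment_sub_eq_sum_mul_div_pow [Field K] {d i : ℕ} (hi : i < d) (p : κ → K × K) :
    powerMoment d p (d - i) = ∑ k, (p k).2 ^ d * ((p k).1 / (p k).2) ^ i := by
  refine Finset.sum_congr rfl fun k _ => ?_
  rw [Nat.sub_sub_self hi.le]
  -- A point with `b_k = 0` has the junk node `a_k / 0 = 0`, but its weight `b_k ^ d` vanishes.
  rcases eq_or_ne (p k).2 0 with hb | hb
  · rw [hb, zero_pow (Nat.sub_ne_zero_of_lt hi), zero_pow (Nat.ne_zero_of_lt hi), mul_zero,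
      zero_mul]
  · rw [pow_sub₀ _ hb hi.le, div_pow]
    ring

lemma sub_lt_card_of_powerMoment_ne_zero [Field K] {d s : ℕ} {p : κ → K × K} (hs : 0 < s)
    (hsd : s ≤ d) (hgt : ∀ l ≤ d, s < l → powerMoment d p l = 0) (hne : powerMoment d p s ≠ 0) :
    d - s < Fintype.card κ := by
  refine lt_card_of_sum_mul_pow_ne_zero (w := fun k => (p k).2 ^ d)
    (t := fun k => (p k).1 / (p k).2) (fun i hi => ?_) ?_
  · rw [← powerMoment_sub_eq_sum_mul_div_pow (by omega)]
    exact hgt _ (by omega) (by omega)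
  · rwa [← powerMoment_sub_eq_sum_mul_div_pow (by omega), Nat.sub_sub_self hsd]

theorem max_lt_card_of_powerMoment_eq_ite [Field K] {d s : ℕ} {p : κ → K × K} (hs : 0 < s)
    (hsd : s < d) (hp : ∀ l ≤ d, powerMoment d p l = if l = s then 1 else 0) :
    max s (d - s) < Fintype.card κ := by
  have hbound {s : ℕ} {p : κ → K × K} (hs : 0 < s) (hsd : s < d)
      (hp : ∀ l ≤ d, powerMoment d p l = if l = s then 1 else 0) : d - s < Fintype.card κ := by
    refine sub_lt_card_of_powerMoment_ne_zero (p := p) hs hsd.le (fun l hl hsl => ?_) ?_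
    · rw [hp l hl, if_neg hsl.ne']
    · simp [hp s hsd.le]
  have hswap : ∀ l ≤ d, powerMoment d (fun k => (p k).swap) l = if l = d - s then 1 else 0 := by
    intro l hl
    rw [powerMoment_swap hl, hp _ (Nat.sub_le d l)]
    exact if_congr (by omega) rfl rfl
  refine max_lt ?_ (hbound hs hsd hp)
  simpa only [Nat.sub_sub_self hsd.le] using
    hbound (Nat.sub_pos_of_lt hsd) (Nat.sub_lt (hs.trans hsd) hs) hswap

end Moments

section RootsOfUnity

variable {K : Type*} [Field K]

lemma sum_zpow_pow_of_isPrimitiveRoot {ω : K} {N : ℕ} (hω : IsPrimitiveRoot ω N) (j : ℤ) :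
    ∑ k : Fin N, (ω ^ j) ^ (k : ℕ) = if (N : ℤ) ∣ j then (N : K) else 0 := by
  rw [Fin.sum_univ_eq_sum_range (fun k => (ω ^ j) ^ k)]
  split_ifs with hj
  · simp [(hω.zpow_eq_one_iff_dvd j).2 hj]
  · rw [geom_sum_eq (mt (hω.zpow_eq_one_iff_dvd j).1 hj), ← zpow_natCast, zpow_comm, zpow_natCast,
      hω.pow_eq_one, one_zpow, sub_self, zero_div]

theorem exists_powerMoment_eq_ite [IsAlgClosed K] {d s N : ℕ} [NeZero (N : K)] (hd : 0 < d)
    (hs : s < N) (hds : d - s < N) :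
    ∃ p : Fin N → K × K, ∀ l ≤ d, powerMoment d p l = if l = s then 1 else 0 := by
  have : NeZero N := .of_neZero_natCast K
  obtain ⟨ω, hω⟩ := HasEnoughRootsOfUnity.exists_primitiveRoot K N
  have hω₀ : ω ≠ 0 := hω.ne_zero (NeZero.ne N)
  have hroot (k : Fin N) : ∃ a : K, a ^ d = (ω ^ (-s : ℤ)) ^ (k : ℕ) / N :=
    IsAlgClosed.exists_pow_nat_eq _ hd
  choose a ha using hroot
  refine ⟨fun k => (a k, a k * ω ^ (k : ℕ)), fun l hl => ?_⟩
  have hterm (k : Fin N) :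
      a k ^ (d - l) * (a k * ω ^ (k : ℕ)) ^ l = (ω ^ (l - s : ℤ)) ^ (k : ℕ) / N := by
    rw [mul_pow, ← mul_assoc, ← pow_add, Nat.sub_add_cancel hl, ha, sub_eq_neg_add,
      zpow_add₀ hω₀, zpow_natCast, mul_pow, pow_right_comm]
    ring
  have hdvd : (N : ℤ) ∣ l - s ↔ l = s := by
    refine ⟨fun h => ?_, fun h => by simp [h]⟩
    have := Int.eq_zero_of_abs_lt_dvd h (by rw [abs_lt]; omega)
    omega
  simp only [powerMoment, hterm]
  rw [← Finset.sum_div, sum_zpow_pow_of_isPrimitiveRoot hω]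
  simp only [hdvd, ite_div, zero_div, div_self (NeZero.ne (N : K))]

end RootsOfUnity

section Hankel

variable {m n : ℕ}

lemma exists_sum_fin_val_eq [NeZero n] {l : ℕ} (hl : l ≤ (n - 1) * m) :
    ∃ i : Fin m → Fin n, ∑ j, (i j : ℕ) = l := by
  have hn : 0 < n := NeZero.pos n
  induction m generalizing l with
  | zero => exact ⟨Fin.elim0, (Nat.le_zero.1 hl).symm⟩
  | succ m ih =>
    rw [Nat.mul_succ] at hl
    obtain ⟨i, hi⟩ := ih (l := l - min l (n - 1)) (by omega)
    refine ⟨Fin.cons ⟨min l (n - 1), by omega⟩ i, ?_⟩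
    simp only [Fin.sum_univ_succ, Fin.cons_zero, Fin.cons_succ, hi]
    omega

lemma prod_vand (a b : ℂ) (i : Fin m → Fin n) :
    ∏ j, vand n a b (i j) = a ^ ((n - 1) * m - ∑ j, (i j : ℕ)) * b ^ ∑ j, (i j : ℕ) := by
  have hsum : ∑ j, (n - 1 - (i j : ℕ)) = (n - 1) * m - ∑ j, (i j : ℕ) := by
    rw [Finset.sum_tsub_distrib _ fun j _ => Nat.le_sub_one_of_lt (i j).isLt, Fin.sum_const,
      smul_eq_mul, mul_comm]
  simp only [vand, Finset.prod_mul_distrib, Finset.prod_pow_eq_pow_sum, hsum]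

theorem IsHankel.mem_vandSet_iff [NeZero n] {r : ℕ} {H : Tensor m n}
    {h : Fin ((n - 1) * m + 1) → ℂ} (hH : IsHankel H h) :
    H ∈ vandSet m n r ↔
      ∃ p : Fin r → ℂ × ℂ, ∀ l : Fin ((n - 1) * m + 1), powerMoment ((n - 1) * m) p l = h l := by
  refine exists_congr fun p => ?_
  simp only [hH _, prod_vand]
  constructor
  · rintro hp ⟨l, hl⟩
    obtain ⟨i, rfl⟩ := exists_sum_fin_val_eq (Nat.le_of_lt_succ hl)
    exact (hp i).symm
  · exact fun hp i => (hp _).symm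

theorem stmt_19_general {s : ℕ} (hs : 0 < s) (hsd : s < (n - 1) * m) {H : Tensor m n}
    (hH : IsHankel H fun l => if (l : ℕ) = s then 1 else 0) :
    vandRank H = max s ((n - 1) * m - s) + 1 := by
  have : NeZero n := ⟨by rintro rfl; simp at hsd⟩
  have hmem : H ∈ vandSet m n (max s ((n - 1) * m - s) + 1) := by
    obtain ⟨p, hp⟩ := exists_powerMoment_eq_ite (K := ℂ) (hs.trans hsd)
      (Nat.lt_succ_of_le (le_max_left s ((n - 1) * m - s)))
      (Nat.lt_succ_of_le (le_max_right s ((n - 1) * m - s)))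
    exact hH.mem_vandSet_iff.2 ⟨p, fun l => hp l (Nat.le_of_lt_succ l.isLt)⟩
  refine le_antisymm (Nat.sInf_le hmem) (le_csInf ⟨_, hmem⟩ fun r hr => ?_)
  obtain ⟨q, hq⟩ := hH.mem_vandSet_iff.1 hr
  simpa using max_lt_card_of_powerMoment_eq_ite hs hsd
    fun l hl => hq ⟨l, Nat.lt_succ_of_le hl⟩

end Hankel

/-- The Hankel tensor of order `m ≥ 2` and dimension 3 associated with
the form `binom(m,2)·x^(m-2)y² + m·x^(m-1)z` has Vandermonde rank `2m-1`. -/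
theorem stmt_19 (m : ℕ) (hm : 2 ≤ m) (H : Tensor m 3)
    (hH : IsHankel H (fun l : Fin ((3 - 1) * m + 1) =>
      if (l : ℕ) = 2 then 1 else 0)) :
    vandRank H = 2 * m - 1 := by
  rw [stmt_19_general two_pos (by omega) hH]
  omega
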